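/- Let W be a graphon, n ≥ 2 an integer, and G a simple graph on vertex set {1,…,n}. Then there exists a permutation π of {1,…,n} such that the relabelled graph G̃ (with i adjacent to j in G̃ iff π(i) adjacent to π(j) in G) satisfies d_□(W_{G̃}, W) ≤ δ_□(G,W) + 2·d_□(W, W̄_n) + 18/√(log₂ n). -/

import Mathlib

open MeasureTheory Set Filter

noncomputable section

/-- A graphon: a symmetric measurable function `ℝ → ℝ → ℝ` with values in `[0,1]`
(only its values on `[0,1]²` matter). -/
def IsGraphon (W : ℝ → ℝ → ℝ) : Prop :=
  (∀ x y, W x y = W y x) ∧ Measurable (Function.uncurry W) ∧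
    ∀ x y, W x y ∈ Set.Icc (0 : ℝ) 1

/-- The cut norm `‖U‖_□`, the supremum over measurable `S, T ⊆ [0,1]` of
`|∫_{S×T} U|`. -/
def cutNorm (U : ℝ → ℝ → ℝ) : ℝ :=
  sSup { r : ℝ | ∃ S T : Set ℝ, MeasurableSet S ∧ MeasurableSet T ∧
    S ⊆ Set.Icc 0 1 ∧ T ⊆ Set.Icc 0 1 ∧
    r = |∫ p in S ×ˢ T, U p.1 p.2| }

/-- `d_□(W₁, W₂) = ‖W₁ - W₂‖_□`. -/
def dCut (W₁ W₂ : ℝ → ℝ → ℝ) : ℝ := cutNorm (fun x y => W₁ x y - W₂ x y)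

/-- A Lebesgue-measure-preserving map `[0,1] → [0,1]`. -/
def IsMPSelf (σ : ℝ → ℝ) : Prop :=
  MeasureTheory.MeasurePreserving σ
      (MeasureTheory.volume.restrict (Set.Icc (0:ℝ) 1))
      (MeasureTheory.volume.restrict (Set.Icc (0:ℝ) 1)) ∧
    Set.MapsTo σ (Set.Icc (0:ℝ) 1) (Set.Icc (0:ℝ) 1)

/-- The cut distance `δ_□(W₁, W₂)`. -/
def deltaCut (W₁ W₂ : ℝ → ℝ → ℝ) : ℝ :=
  sInf { r : ℝ | ∃ σ₁ σ₂ : ℝ → ℝ, IsMPSelf σ₁ ∧ IsMPSelf σ₂ ∧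
    r = cutNorm (fun x y => W₁ (σ₁ x) (σ₁ y) - W₂ (σ₂ x) (σ₂ y)) }

/-- The binary entropy function `h` (base-2 logarithm; `logb 2 0 = 0` by convention,
so `h 0 = h 1 = 0`). -/
def binEnt (x : ℝ) : ℝ := -x * Real.logb 2 x - (1 - x) * Real.logb 2 (1 - x)

/-- `h̃ x = h (min x (1/2))`. -/
def htilde (x : ℝ) : ℝ := binEnt (min x (1/2))

/-- The entropy `Ent(W) = ∫₀¹∫₀¹ h(W(x,y)) dx dy` of a graphon. -/
def graphonEnt (W : ℝ → ℝ → ℝ) : ℝ :=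
  ∫ x in Set.Icc (0:ℝ) 1, ∫ y in Set.Icc (0:ℝ) 1, binEnt (W x y)

open Classical in
/-- The graphon `W_G` of a simple graph `G` on `{1, …, n}` (vertices as `Fin n`,
vertex `i : Fin n` representing `i+1`): `W_G x y = 1` iff `⌈nx⌉⌈ny⌉ ∈ E(G)`. -/
def graphonOfGraph {n : ℕ} (G : SimpleGraph (Fin n)) : ℝ → ℝ → ℝ := fun x y =>
  if ∃ i j : Fin n, G.Adj i j ∧ ⌈(n : ℝ) * x⌉ = ((i : ℕ) : ℤ) + 1 ∧
      ⌈(n : ℝ) * y⌉ = ((j : ℕ) : ℤ) + 1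
  then 1 else 0

/-- A labelled graph class: a set of graphs on `{1,…,n}` for each `n`. -/
abbrev GraphClass := ∀ n : ℕ, Set (SimpleGraph (Fin n))

/-- A graph class is closed under relabelling by permutations. -/
def IsGraphClass (Q : GraphClass) : Prop :=
  ∀ (n : ℕ) (π : Equiv.Perm (Fin n)) (G : SimpleGraph (Fin n)),
    G ∈ Q n → G.comap ⇑π ∈ Q n

/-- A hereditary graph class: a graph class closed under taking induced subgraphs
(relabelled by the order-preserving bijection). -/
def IsHereditary (Q : GraphClass) : Prop :=
  IsGraphClass Q ∧
    ∀ (m n : ℕ) (f : Fin m → Fin n), StrictMono f →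
      ∀ G ∈ Q n, G.comap f ∈ Q m

/-- `Q̂`: the set of graphons which are limits (in cut distance) of sequences of graphs in
the class `Q` whose orders tend to infinity. -/
def limitSet (Q : GraphClass) : Set (ℝ → ℝ → ℝ) :=
  { W | IsGraphon W ∧
    ∃ (nk : ℕ → ℕ) (Gk : ∀ k, SimpleGraph (Fin (nk k))),
      (∀ k, Gk k ∈ Q (nk k)) ∧ Filter.Tendsto nk Filter.atTop Filter.atTop ∧
      Filter.Tendsto (fun k => deltaCut (graphonOfGraph (Gk k)) W) Filter.atTop (nhds 0) }

/-- `C(n,2) = n(n-1)/2` as a real number. -/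
def choose2 (n : ℕ) : ℝ := (n : ℝ) * ((n : ℝ) - 1) / 2

open Classical in
/-- The step function `E[W | P]` obtained by averaging `W` over the products of the
parts of the partition `P` of `[0,1]`. -/
def condExpPart {k : ℕ} (P : Fin k → Set ℝ) (W : ℝ → ℝ → ℝ) : ℝ → ℝ → ℝ := fun x y =>
  ∑ i : Fin k, ∑ j : Fin k,
    if x ∈ P i ∧ y ∈ P j then ⨍ p in (P i) ×ˢ (P j), W p.1 p.2 else 0

/-- `W̄_n`: the step function of `W` for the partition of `[0,1]` into `n` consecutive
intervals of length `1/n`. -/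
def barStep (n : ℕ) (W : ℝ → ℝ → ℝ) : ℝ → ℝ → ℝ :=
  condExpPart (fun i : Fin n => Set.Ioc (((i : ℕ) : ℝ)/n) ((((i : ℕ) : ℝ) + 1)/n)) W

/-- `N̂_□(n, δ; W)`: the number of graphs `G` on `{1,…,n}` with `d_□(W_G, W) ≤ δ`. -/
def NhatCut (n : ℕ) (δ : ℝ) (W : ℝ → ℝ → ℝ) : ℕ :=
  Nat.card {G : SimpleGraph (Fin n) // dCut (graphonOfGraph G) W ≤ δ}

/-- `N_□(n, δ; W)`: the number of graphs `G` on `{1,…,n}` with `δ_□(W_G, W) ≤ δ`. -/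
def NCut (n : ℕ) (δ : ℝ) (W : ℝ → ℝ → ℝ) : ℕ :=
  Nat.card {G : SimpleGraph (Fin n) // deltaCut (graphonOfGraph G) W ≤ δ}

open Classical in
/-- The induced density `p(F; W)` of a graph `F` on `{1,…,k}` in a graphon `W`. -/
def inducedDensity {k : ℕ} (F : SimpleGraph (Fin k)) (W : ℝ → ℝ → ℝ) : ℝ :=
  ∫ x : Fin k → ℝ in Set.univ.pi (fun _ : Fin k => Set.Icc (0:ℝ) 1),
    ∏ i : Fin k, ∏ j : Fin k,
      if i < j then (if F.Adj i j then W (x i) (x j) else 1 - W (x i) (x j)) else 1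

open Classical in
/-- The randomness support graphon `1_{rand(W)}` of `W`. -/
def randIndicator (W : ℝ → ℝ → ℝ) : ℝ → ℝ → ℝ := fun x y =>
  if 0 < W x y ∧ W x y < 1 then 1 else 0

/-- A kernel `U` is `K_r`-free if `∏_{i<j} U(x_i, x_j) = 0` for a.e. `x ∈ [0,1]^r`. -/
def KFree (r : ℕ) (U : ℝ → ℝ → ℝ) : Prop :=
  ∀ᵐ x ∂(MeasureTheory.volume.restrict (Set.univ.pi fun _ : Fin r => Set.Icc (0:ℝ) 1)),
    (∏ i : Fin r, ∏ j : Fin r, if i < j then U (x i) (x j) else 1) = 0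

open Classical in
/-- The graphon `W^{(r,s)}`: equal to `1/2` off the diagonal blocks, `1` on the first `s`
diagonal blocks `I_i × I_i`, and `0` on the remaining diagonal blocks. -/
def Wrs (r s : ℕ) : ℝ → ℝ → ℝ := fun x y =>
  if ∃ i j : Fin r, i ≠ j ∧ x ∈ Set.Ioc (((i:ℕ):ℝ)/r) ((((i:ℕ):ℝ)+1)/r) ∧
      y ∈ Set.Ioc (((j:ℕ):ℝ)/r) ((((j:ℕ):ℝ)+1)/r)
  then 1/2
  else if ∃ i : Fin r, (i:ℕ) < s ∧ x ∈ Set.Ioc (((i:ℕ):ℝ)/r) ((((i:ℕ):ℝ)+1)/r) ∧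
      y ∈ Set.Ioc (((i:ℕ):ℝ)/r) ((((i:ℕ):ℝ)+1)/r)
  then 1 else 0

/-- `E_r = ⋃_{i ≠ j} I_i × I_j` where `I_i`, `i = 1, …, r`, are the consecutive
intervals of length `1/r` in `[0,1]`. -/
def Er (r : ℕ) : Set (ℝ × ℝ) :=
  ⋃ (i : Fin r) (j : Fin r) (_ : i ≠ j),
    (Set.Ioc (((i:ℕ):ℝ)/r) ((((i:ℕ):ℝ)+1)/r)) ×ˢ (Set.Ioc (((j:ℕ):ℝ)/r) ((((j:ℕ):ℝ)+1)/r))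

/-- `R_r`: the set of graphons equal to `1/2` on `E_r` and `{0,1}`-valued elsewhere
on `[0,1]²`. -/
def Rset (r : ℕ) : Set (ℝ → ℝ → ℝ) :=
  { W | IsGraphon W ∧ (∀ p ∈ Er r, W p.1 p.2 = 1/2) ∧
      ∀ p ∈ ((Set.Icc (0:ℝ) 1) ×ˢ (Set.Icc (0:ℝ) 1)) \ Er r,
        W p.1 p.2 = 0 ∨ W p.1 p.2 = 1 }

/-- A graphon is random-free if it is `{0,1}`-valued a.e. on `[0,1]²`. -/
def IsRandomFree (W : ℝ → ℝ → ℝ) : Prop :=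
  ∀ᵐ p ∂(MeasureTheory.volume.restrict ((Set.Icc (0:ℝ) 1) ×ˢ (Set.Icc (0:ℝ) 1))),
    W (Prod.fst p) (Prod.snd p) = 0 ∨ W (Prod.fst p) (Prod.snd p) = 1




/-- Multilinear cut bound: all `[0,1]`-valued test functions. -/
def CutLe {ι κ : Type*} [Fintype ι] [Fintype κ] (M : ι → κ → ℝ) (c : ℝ) : Prop :=
  ∀ (f : ι → ℝ) (g : κ → ℝ), (∀ i, f i ∈ Set.Icc (0:ℝ) 1) → (∀ j, g j ∈ Set.Icc (0:ℝ) 1) →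
    |∑ i, ∑ j, M i j * f i * g j| ≤ c

theorem fin_lin {ι : Type*} [Fintype ι] (h : ι → ℝ) (c : ℝ)
    (hc : ∀ S : Finset ι, |∑ i ∈ S, h i| ≤ c) (f : ι → ℝ)
    (hf : ∀ i, f i ∈ Set.Icc (0:ℝ) 1) : |∑ i, h i * f i| ≤ c := by
  classical
  rw [abs_le]
  constructor
  · have h1 := (abs_le.1 (hc (Finset.univ.filter (fun i => h i < 0)))).1
    refine h1.trans ?_
    rw [Finset.sum_filter]
    refine Finset.sum_le_sum fun i _ => ?_
    have := hf i
    split_ifs with hi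
    · nlinarith [this.1, this.2]
    · exact mul_nonneg (not_lt.1 hi) this.1
  · have h1 := (abs_le.1 (hc (Finset.univ.filter (fun i => 0 < h i)))).2
    refine le_trans ?_ h1
    rw [Finset.sum_filter]
    refine Finset.sum_le_sum fun i _ => ?_
    have := hf i
    split_ifs with hi
    · nlinarith [this.1, this.2]
    · exact mul_nonpos_of_nonpos_of_nonneg (not_lt.1 hi) this.1

theorem fin_bilin {ι κ : Type*} [Fintype ι] [Fintype κ] (M : ι → κ → ℝ) (c : ℝ)
    (hc : ∀ (S : Finset ι) (T : Finset κ), |∑ i ∈ S, ∑ j ∈ T, M i j| ≤ c) : CutLe M c := by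
  intro f g hf hg
  have key : ∀ S : Finset ι, |∑ i ∈ S, ∑ j, M i j * g j| ≤ c := by
    intro S
    rw [Finset.sum_comm]
    simp_rw [← Finset.sum_mul]
    refine fin_lin _ c ?_ g hg
    intro T
    rw [Finset.sum_comm]
    exact hc S T
  have := fin_lin _ c key f hf
  convert this using 5 with i _
  rw [Finset.sum_mul]
  exact Finset.sum_congr rfl fun j _ => by ring

/-- Weak (Frieze-Kannan) regularity. -/
theorem weak_reg {n : ℕ} (ε : ℝ) (hε : 0 < ε) (N : ℕ) : ∀ (R : Fin n → Fin n → ℝ),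
    (∑ i, ∑ j, R i j ^ 2 ≤ (n:ℝ)^2 * (N * ε^2)) →
    ∃ (κ : Type) (_ : Fintype κ) (p : Fin n → κ) (a : κ → κ → ℝ),
      Fintype.card κ ≤ 4 ^ N ∧ (∀ s t, |a s t| ≤ N * ε) ∧
      CutLe (fun i j => R i j - a (p i) (p j)) (ε * (n:ℝ)^2) := by
  classical
  induction N with
  | zero =>
    intro R hR
    refine ⟨Unit, inferInstance, fun _ => (), fun _ _ => 0, by simp, by simp, ?_⟩
    have h0 : ∀ i j, R i j = 0 := by
      have h1 : ∑ i, ∑ j, R i j ^ 2 = 0 := le_antisymm (by simpa using hR)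
        (Finset.sum_nonneg fun i _ => Finset.sum_nonneg fun j _ => sq_nonneg _)
      intro i j
      rw [Finset.sum_eq_zero_iff_of_nonneg
        (fun i _ => Finset.sum_nonneg fun j _ => sq_nonneg _)] at h1
      have h2 := h1 i (Finset.mem_univ _)
      rw [Finset.sum_eq_zero_iff_of_nonneg (fun j _ => sq_nonneg _)] at h2
      exact pow_eq_zero_iff (two_ne_zero) |>.1 (h2 j (Finset.mem_univ _))
    intro f g _ _
    simp [h0]
    positivity
  | succ N ih =>
    intro R hR
    by_cases hcut : ∀ (S T : Finset (Fin n)), |∑ i ∈ S, ∑ j ∈ T, R i j| ≤ ε * (n:ℝ)^2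
    · refine ⟨Unit, inferInstance, fun _ => (), fun _ _ => 0, ?_, ?_, ?_⟩
      · simp [Nat.one_le_pow]
      · intro _ _; simp; positivity
      · simpa using fin_bilin R _ hcut
    · push Not at hcut
      obtain ⟨S, T, hST⟩ := hcut
      set w : ℝ := ∑ i ∈ S, ∑ j ∈ T, R i j with hw
      obtain ⟨s, hs, hsw⟩ : ∃ s : ℝ, (s = 1 ∨ s = -1) ∧ s * w = |w| := by
        rcases le_total 0 w with h | h
        · exact ⟨1, Or.inl rfl, by rw [abs_of_nonneg h]; ring⟩
        · exact ⟨-1, Or.inr rfl, by rw [abs_of_nonpos h]; ring⟩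
      have hs2 : s ^ 2 = 1 := by rcases hs with rfl | rfl <;> norm_num
      have hsabs : |s| = 1 := by rcases hs with rfl | rfl <;> norm_num
      let χ : Fin n → Fin n → ℝ := fun i j => if i ∈ S ∧ j ∈ T then 1 else 0
      have hχw : ∑ i, ∑ j, R i j * χ i j = w := by
        simp only [χ, hw]
        rw [← Finset.sum_filter_add_sum_filter_not Finset.univ (fun i => i ∈ S)]
        simp only [Finset.filter_univ_mem]
        rw [Finset.sum_eq_zero (s := Finset.univ.filter (fun i => i ∉ S)), add_zero]
        · refine Finset.sum_congr rfl fun i hi => ?_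
          simp [hi]
        · intro i hi
          simp at hi
          simp [hi]
      have hχ2 : ∑ i, ∑ j, χ i j ^ 2 ≤ (n:ℝ)^2 := by
        calc ∑ i, ∑ j, χ i j ^ 2 ≤ ∑ i : Fin n, ∑ j : Fin n, (1:ℝ) := by
              refine Finset.sum_le_sum fun i _ => Finset.sum_le_sum fun j _ => ?_
              simp only [χ]; split_ifs <;> norm_num
          _ = (n:ℝ)^2 := by simp; ring
      have hexp : ∑ i, ∑ j, (R i j - s * ε * χ i j) ^ 2
          = ∑ i, ∑ j, R i j ^ 2 - 2 * ε * (s * w) + ε^2 * ∑ i, ∑ j, χ i j ^ 2 := by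
        rw [← hχw]
        simp only [Finset.mul_sum, ← Finset.sum_sub_distrib, ← Finset.sum_add_distrib]
        refine Finset.sum_congr rfl fun i _ => Finset.sum_congr rfl fun j _ => ?_
        linear_combination (ε^2 * χ i j ^ 2) * hs2
      obtain ⟨κ, iκ, p, a, hcard, ha, hc⟩ := ih (fun i j => R i j - s * ε * χ i j) (by
        rw [hexp, hsw]
        push_cast at hR
        have := mul_le_mul_of_nonneg_left hχ2 (sq_nonneg ε)
        nlinarith [mul_lt_mul_of_pos_left hST hε])
      refine ⟨κ × Bool × Bool, inferInstance, fun i => (p i, decide (i ∈ S), decide (i ∈ T)),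
        fun x y => a x.1 y.1 + s * ε * (if x.2.1 = true ∧ y.2.2 = true then 1 else 0), ?_, ?_, ?_⟩
      · simp only [Fintype.card_prod, Fintype.card_bool]
        rw [pow_succ]; omega
      · intro x y
        refine (abs_add_le _ _).trans ?_
        have h1 := ha x.1 y.1
        have h2 : |s * ε * (if x.2.1 = true ∧ y.2.2 = true then (1:ℝ) else 0)| ≤ ε := by
          rw [abs_mul, abs_mul, hsabs, abs_of_pos hε]
          split_ifs <;> simp [hε.le]
        push_cast
        linarith
      · convert hc using 3 with i j
        simp only [χ, decide_eq_true_eq]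
        ring

/-- Rounding of a coupling to a permutation. -/
theorem exists_perm {n : ℕ} {κ κ' : Type} [Fintype κ] [Fintype κ'] [DecidableEq κ] [DecidableEq κ']
    (p : Fin n → κ) (q : Fin n → κ') (N : κ → κ' → ℕ)
    (h1 : ∀ s, ∑ t, N s t ≤ Fintype.card {i // p i = s})
    (h2 : ∀ t, ∑ s, N s t ≤ Fintype.card {i // q i = t}) :
    ∃ π : Equiv.Perm (Fin n), ∀ s t,
      N s t ≤ (Finset.univ.filter (fun u => p (π u) = s ∧ q u = t)).card := by
  classical
  have e1 : ∀ s, Nonempty ((Σ t, Fin (N s t)) ↪ {i // p i = s}) := fun s =>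
    Function.Embedding.nonempty_of_card_le (by simpa using h1 s)
  have e2 : ∀ t, Nonempty ((Σ s, Fin (N s t)) ↪ {i // q i = t}) := fun t =>
    Function.Embedding.nonempty_of_card_le (by simpa using h2 t)
  let α := fun s => (e1 s).some
  let β := fun t => (e2 t).some
  let E := Σ st : κ × κ', Fin (N st.1 st.2)
  let a : E → Fin n := fun e => (α e.1.1 ⟨e.1.2, e.2⟩ : {i // p i = e.1.1})
  let b : E → Fin n := fun e => (β e.1.2 ⟨e.1.1, e.2⟩ : {i // q i = e.1.2})
  have ap : ∀ e : E, p (a e) = e.1.1 := fun e => (α e.1.1 ⟨e.1.2, e.2⟩).2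
  have bq : ∀ e : E, q (b e) = e.1.2 := fun e => (β e.1.2 ⟨e.1.1, e.2⟩).2
  have ainj : Function.Injective a := by
    rintro ⟨⟨s, t⟩, k⟩ ⟨⟨s', t'⟩, k'⟩ h
    have hs : s = s' := by simpa [ap] using congrArg p h
    subst hs
    have := (α s).injective (Subtype.ext h)
    simp only [Sigma.mk.injEq] at this
    obtain ⟨rfl, hk⟩ := this
    simp at hk
    rw [hk]
  have binj : Function.Injective b := by
    rintro ⟨⟨s, t⟩, k⟩ ⟨⟨s', t'⟩, k'⟩ h
    have hs : t = t' := by simpa [bq] using congrArg q h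
    subst hs
    have := (β t).injective (Subtype.ext h)
    simp only [Sigma.mk.injEq] at this
    obtain ⟨rfl, hk⟩ := this
    simp at hk
    rw [hk]
  let e : {x // x ∈ Set.range b} ≃ {x // x ∈ Set.range a} :=
    (Equiv.ofInjective b binj).symm.trans (Equiv.ofInjective a ainj)
  refine ⟨e.extendSubtype, fun s t => ?_⟩
  have hπ : ∀ x, e.extendSubtype (b x) = a x := by
    intro x
    rw [Equiv.extendSubtype_apply_of_mem e (b x) ⟨x, rfl⟩]
    have : (⟨b x, ⟨x, rfl⟩⟩ : {y // y ∈ Set.range b}) = Equiv.ofInjective b binj x := rfl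
    simp only [e, Equiv.trans_apply, this, Equiv.symm_apply_apply]
    rfl
  have : (Finset.univ.image (fun k : Fin (N s t) => b ⟨(s, t), k⟩)).card = N s t := by
    rw [Finset.card_image_of_injective]
    · simp
    · intro k k' h
      have := binj h
      exact eq_of_heq (Sigma.mk.inj_iff.1 this).2
  rw [← this]
  apply Finset.card_le_card
  intro u hu
  simp only [Finset.mem_image, Finset.mem_univ, true_and] at hu
  obtain ⟨k, rfl⟩ := hu
  simp [hπ, ap, bq]

theorem dbl_fiber {Ω K : Type*} [Fintype Ω] [Fintype K] [DecidableEq K] (τ : Ω → K)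
    (h h' : Ω → ℝ) (D : K → K → ℝ) :
    ∑ o, ∑ o', D (τ o) (τ o') * h o * h' o' =
      ∑ k, ∑ k', D k k' * (∑ o, if τ o = k then h o else 0) *
        (∑ o, if τ o = k' then h' o else 0) := by
  have one : ∀ (w : Ω → ℝ) (φ : K → ℝ), ∑ o, φ (τ o) * w o =
      ∑ k, φ k * ∑ o, if τ o = k then w o else 0 := by
    intro w φ
    simp_rw [Finset.mul_sum]
    rw [Finset.sum_comm]
    refine Finset.sum_congr rfl fun o _ => ?_
    simp
  have s1 : ∀ o, ∑ o', D (τ o) (τ o') * h o * h' o' =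
      (∑ k', D (τ o) k' * ∑ o, if τ o = k' then h' o else 0) * h o := by
    intro o
    rw [← one h' (fun k' => D (τ o) k'), Finset.sum_mul]
    exact Finset.sum_congr rfl fun _ _ => by ring
  simp_rw [s1]
  rw [one h (fun k => ∑ k', D k k' * ∑ o, if τ o = k' then h' o else 0)]
  refine Finset.sum_congr rfl fun k _ => ?_
  rw [Finset.sum_mul]
  exact Finset.sum_congr rfl fun _ _ => by ring

theorem avg_exists {Ω K : Type*} [Fintype Ω] [DecidableEq K] (τ : Ω → K)
    (f : Ω → ℝ) (hf : ∀ o, f o ∈ Set.Icc (0:ℝ) 1) :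
    ∃ F : K → ℝ, (∀ k, F k ∈ Set.Icc (0:ℝ) 1) ∧
      ∀ k, (∑ o, if τ o = k then f o else 0) =
        ((Finset.univ.filter (fun o => τ o = k)).card : ℝ) * F k := by
  refine ⟨fun k => (∑ o, if τ o = k then f o else 0) /
    ((Finset.univ.filter (fun o => τ o = k)).card : ℝ), fun k => ⟨?_, ?_⟩, fun k => ?_⟩
  · refine div_nonneg (Finset.sum_nonneg fun o _ => ?_) (Nat.cast_nonneg _)
    split_ifs
    · exact (hf o).1
    · exact le_rfl
  · refine div_le_one_of_le₀ ?_ (Nat.cast_nonneg _)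
    rw [← Finset.sum_filter]
    refine (Finset.sum_le_sum (g := fun _ => (1:ℝ)) fun o _ => (hf o).2).trans ?_
    simp
  · by_cases h0 : ((Finset.univ.filter (fun o => τ o = k)).card : ℝ) = 0
    · rw [h0]
      have : Finset.univ.filter (fun o => τ o = k) = ∅ := by
        simpa only [Nat.cast_eq_zero, Finset.card_eq_zero] using h0
      rw [← Finset.sum_filter, this]
      simp
    · field_simp

theorem CutLe.scaled {n : ℕ} (hn : 0 < n) {M : Fin n → Fin n → ℝ} {ε : ℝ}
    (h : CutLe M (ε * (n:ℝ)^2)) (f g : Fin n → ℝ) (hf : ∀ i, f i ∈ Set.Icc (0:ℝ) (1/n))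
    (hg : ∀ i, g i ∈ Set.Icc (0:ℝ) (1/n)) : |∑ i, ∑ j, M i j * f i * g j| ≤ ε := by
  have hn' : (0:ℝ) < n := by exact_mod_cast hn
  have aux : ∀ x : ℝ, x ∈ Set.Icc (0:ℝ) (1/n) → (n:ℝ) * x ∈ Set.Icc (0:ℝ) 1 := by
    intro x hx
    refine ⟨mul_nonneg hn'.le hx.1, ?_⟩
    calc (n:ℝ) * x ≤ n * (1/n) := mul_le_mul_of_nonneg_left hx.2 hn'.le
      _ = 1 := by field_simp
  have := h (fun i => n * f i) (fun i => n * g i) (fun i => aux _ (hf i)) (fun i => aux _ (hg i))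
  have e : ∑ i, ∑ j, M i j * (n * f i) * (n * g j) = (n:ℝ)^2 * ∑ i, ∑ j, M i j * f i * g j := by
    simp only [Finset.mul_sum]
    exact Finset.sum_congr rfl fun _ _ => Finset.sum_congr rfl fun _ _ => by ring
  rw [e, abs_mul, abs_of_pos (by positivity), mul_comm] at this
  exact le_of_mul_le_mul_right this (by positivity)

set_option maxHeartbeats 2000000 in
theorem comb {n : ℕ} (hn : 0 < n) (A B : Fin n → Fin n → ℝ)
    (hA : ∀ i j, A i j ∈ Set.Icc (0:ℝ) 1) (hB : ∀ i j, B i j ∈ Set.Icc (0:ℝ) 1)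
    (X : Fin n → Fin n → ℝ) (hX : ∀ i u, 0 ≤ X i u)
    (hXr : ∀ i, ∑ u, X i u = 1 / n) (hXc : ∀ u, ∑ i, X i u = 1 / n) (c : ℝ)
    (hc : CutLe (fun (r s : Fin n × Fin n) =>
      X r.1 r.2 * X s.1 s.2 * (A r.1 s.1 - B r.2 s.2)) c)
    (ε : ℝ) (hε : 0 < ε) (N : ℕ) (hN : 1 ≤ N * ε^2) :
    ∃ π : Equiv.Perm (Fin n), CutLe (fun u v => A (π u) (π v) - B u v)
      ((c + 4 * ε + 8 * N * ε * 16^N / n) * (n:ℝ)^2) := by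
  classical
  have hn' : (0:ℝ) < n := by exact_mod_cast hn
  have hsq : ∀ A : Fin n → Fin n → ℝ, (∀ i j, A i j ∈ Set.Icc (0:ℝ) 1) →
      ∑ i, ∑ j, A i j ^ 2 ≤ (n:ℝ)^2 * (N * ε^2) := by
    intro A hA
    calc ∑ i, ∑ j, A i j ^ 2 ≤ ∑ i : Fin n, ∑ j : Fin n, (1:ℝ) := by
          refine Finset.sum_le_sum fun i _ => Finset.sum_le_sum fun j _ => ?_
          have := hA i j
          nlinarith [this.1, this.2]
      _ = (n:ℝ)^2 * 1 := by simp; ring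
      _ ≤ _ := mul_le_mul_of_nonneg_left hN (by positivity)
  obtain ⟨κ, iκ, p, a, hκ, ha, hAa⟩ := weak_reg ε hε N A (hsq A hA)
  obtain ⟨κ', iκ', q, b, hκ', hb, hBb⟩ := weak_reg ε hε N B (hsq B hB)
  let x : κ × κ' → ℝ := fun k => ∑ r : Fin n × Fin n, if (p r.1, q r.2) = k then X r.1 r.2 else 0
  have hx0 : ∀ k, 0 ≤ x k := fun k => Finset.sum_nonneg fun r _ => by
    split_ifs
    · exact hX _ _
    · exact le_rfl
  have hxr : ∀ s, ∑ t, x (s, t) = (Fintype.card {i // p i = s} : ℝ) / n := by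
    intro s
    simp only [x, Prod.mk.injEq]
    rw [Finset.sum_comm]
    have : ∀ r : Fin n × Fin n, (∑ t, if p r.1 = s ∧ q r.2 = t then X r.1 r.2 else 0)
        = if p r.1 = s then X r.1 r.2 else 0 := by
      intro r
      by_cases h : p r.1 = s <;> simp [h]
    simp_rw [this]
    rw [Fintype.sum_prod_type]
    have : ∀ i, (∑ u, if p i = s then X i u else 0) = if p i = s then (1/n : ℝ) else 0 := by
      intro i
      by_cases h : p i = s <;> simp [h, hXr]
    simp_rw [this]
    rw [← Finset.sum_filter, Finset.sum_const, Fintype.card_subtype]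
    simp [div_eq_mul_inv]
  have hxc : ∀ t, ∑ s, x (s, t) = (Fintype.card {i // q i = t} : ℝ) / n := by
    intro t
    simp only [x, Prod.mk.injEq]
    rw [Finset.sum_comm]
    have : ∀ r : Fin n × Fin n, (∑ s, if p r.1 = s ∧ q r.2 = t then X r.1 r.2 else 0)
        = if q r.2 = t then X r.1 r.2 else 0 := by
      intro r
      by_cases h : q r.2 = t <;> simp [h]
    simp_rw [this]
    rw [Fintype.sum_prod_type_right]
    have : ∀ i, (∑ u, if q i = t then X u i else 0) = if q i = t then (1/n : ℝ) else 0 := by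
      intro i
      by_cases h : q i = t <;> simp [h, hXc]
    simp_rw [this]
    rw [← Finset.sum_filter, Finset.sum_const, Fintype.card_subtype]
    simp [div_eq_mul_inv]
  obtain ⟨π, hπ⟩ := exists_perm p q (fun s t => ⌊(n:ℝ) * x (s, t)⌋₊)
    (by
      intro s
      have : ((∑ t, ⌊(n:ℝ) * x (s, t)⌋₊ : ℕ) : ℝ) ≤ (Fintype.card {i // p i = s} : ℝ) := by
        push_cast
        calc _ ≤ ∑ t, (n:ℝ) * x (s, t) :=
              Finset.sum_le_sum fun t _ => Nat.floor_le (mul_nonneg hn'.le (hx0 _))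
          _ = _ := by rw [← Finset.mul_sum, hxr]; field_simp
      exact_mod_cast this)
    (by
      intro t
      have : ((∑ s, ⌊(n:ℝ) * x (s, t)⌋₊ : ℕ) : ℝ) ≤ (Fintype.card {i // q i = t} : ℝ) := by
        push_cast
        calc _ ≤ ∑ s, (n:ℝ) * x (s, t) :=
              Finset.sum_le_sum fun t _ => Nat.floor_le (mul_nonneg hn'.le (hx0 _))
          _ = _ := by rw [← Finset.mul_sum, hxc]; field_simp
      exact_mod_cast this)
  let τ : Fin n → κ × κ' := fun u => (p (π u), q u)
  let y : κ × κ' → ℝ := fun k => ((Finset.univ.filter (fun u => τ u = k)).card : ℝ) / n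
  have hy0 : ∀ k, 0 ≤ y k := fun k => by positivity
  have hsx : ∑ k, x k = 1 := by
    simp only [x]
    rw [Finset.sum_comm]
    simp only [Finset.sum_ite_eq, Finset.mem_univ, if_true]
    rw [Fintype.sum_prod_type]
    simp [hXr, hn.ne']
  have hsy : ∑ k, y k = 1 := by
    simp only [y]
    rw [← Finset.sum_div, ← Nat.cast_sum, ← Finset.card_eq_sum_card_fiberwise]
    · simp [hn.ne']
    · intro _ _; simp
  have hyx : ∀ k, x k - 1 / n ≤ y k := by
    rintro ⟨s, t⟩
    have h1 := hπ s t
    have h2 : ((⌊(n:ℝ) * x (s, t)⌋₊ : ℕ) : ℝ) ≤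
        ((Finset.univ.filter (fun u => τ u = (s, t))).card : ℝ) := by
      simp only [τ, Prod.mk.injEq]
      exact_mod_cast h1
    have h3 := Nat.lt_floor_add_one ((n:ℝ) * x (s, t))
    have h4 : (n:ℝ) * x (s, t) - 1 ≤ ((Finset.univ.filter (fun u => τ u = (s, t))).card : ℝ) := by
      linarith
    have h5 := div_le_div_of_nonneg_right h4 hn'.le
    calc x (s, t) - 1 / n = ((n:ℝ) * x (s, t) - 1) / n := by field_simp
      _ ≤ _ := h5
  have hK : (Fintype.card (κ × κ') : ℝ) ≤ 16 ^ N := by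
    have : Fintype.card (κ × κ') ≤ 16 ^ N := by
      rw [Fintype.card_prod]
      calc _ ≤ 4 ^ N * 4 ^ N := Nat.mul_le_mul hκ hκ'
        _ = 16 ^ N := by rw [← mul_pow]; norm_num
    exact_mod_cast this
  have hdiff : ∑ k, |y k - x k| ≤ 2 * 16 ^ N / n := by
    calc ∑ k, |y k - x k| ≤ ∑ k, ((y k - x k) + 2 / n) := by
          refine Finset.sum_le_sum fun k _ => ?_
          have h1 := hyx k
          have h2 : (0:ℝ) < 1 / n := by positivity
          have h3 : (2:ℝ) / n = 2 * (1 / n) := by ring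
          rw [abs_le]; constructor <;> linarith
      _ = (Fintype.card (κ × κ') : ℝ) * (2 / n) := by
          rw [Finset.sum_add_distrib, Finset.sum_sub_distrib, hsx, hsy]
          simp only [Finset.sum_const, nsmul_eq_mul, Finset.card_univ]; ring
      _ ≤ 16 ^ N * (2 / n) := mul_le_mul_of_nonneg_right hK (by positivity)
      _ = _ := by ring
  refine ⟨π, ?_⟩
  intro f g hf hg
  let D : κ × κ' → κ × κ' → ℝ := fun k l => a k.1 l.1 - b k.2 l.2
  have hD : ∀ k l, |D k l| ≤ 2 * (N * ε) := fun k l => by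
    refine (abs_sub _ _).trans ?_
    linarith [ha k.1 l.1, hb k.2 l.2]
  obtain ⟨F, hF, hFe⟩ := avg_exists τ f hf
  obtain ⟨H, hH, hHe⟩ := avg_exists τ g hg
  -- type-level value for x
  have hV : |∑ k, ∑ l, D k l * (x k * F k) * (x l * H l)| ≤ c + 2 * ε := by
    let F' : Fin n × Fin n → ℝ := fun r => F (p r.1, q r.2)
    let H' : Fin n × Fin n → ℝ := fun r => H (p r.1, q r.2)
    have hbound : ∀ (Z : Fin n → ℝ) (φ : Fin n → ℝ), (∀ u, 0 ≤ Z u) → ∑ u, Z u = 1 / n →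
        (∀ u, φ u ∈ Set.Icc (0:ℝ) 1) → ∑ u, Z u * φ u ∈ Set.Icc (0:ℝ) (1/n) := by
      intro Z φ hZ hZs hφ
      refine ⟨Finset.sum_nonneg fun u _ => mul_nonneg (hZ u) (hφ u).1, ?_⟩
      rw [← hZs]
      exact Finset.sum_le_sum fun u _ => mul_le_of_le_one_right (hZ u) (hφ u).2
    have e0 : ∑ k, ∑ l, D k l * (x k * F k) * (x l * H l) =
        ∑ r : Fin n × Fin n, ∑ s : Fin n × Fin n, D (p r.1, q r.2) (p s.1, q s.2) *
          (X r.1 r.2 * F' r) * (X s.1 s.2 * H' s) := by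
      rw [dbl_fiber (fun r : Fin n × Fin n => (p r.1, q r.2)) (fun r => X r.1 r.2 * F' r)
        (fun r => X r.1 r.2 * H' r) D]
      have : ∀ (Q : κ × κ' → ℝ) k, x k * Q k = ∑ r : Fin n × Fin n,
          if (p r.1, q r.2) = k then X r.1 r.2 * Q (p r.1, q r.2) else 0 := by
        intro Q k
        simp only [x]
        rw [Finset.sum_mul]
        refine Finset.sum_congr rfl fun r _ => ?_
        split_ifs with h
        · rw [h]
        · simp
      refine Finset.sum_congr rfl fun k _ => Finset.sum_congr rfl fun l _ => ?_
      rw [this F, this H]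
    have e1 : ∑ r : Fin n × Fin n, ∑ s : Fin n × Fin n, D (p r.1, q r.2) (p s.1, q s.2) *
          (X r.1 r.2 * F' r) * (X s.1 s.2 * H' s) =
        ∑ r : Fin n × Fin n, ∑ s : Fin n × Fin n,
            X r.1 r.2 * X s.1 s.2 * (A r.1 s.1 - B r.2 s.2) * F' r * H' s
        - ∑ r : Fin n × Fin n, ∑ s : Fin n × Fin n,
            (A r.1 s.1 - a (p r.1) (p s.1)) * (X r.1 r.2 * F' r) * (X s.1 s.2 * H' s)
        + ∑ r : Fin n × Fin n, ∑ s : Fin n × Fin n,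
            (B r.2 s.2 - b (q r.2) (q s.2)) * (X r.1 r.2 * F' r) * (X s.1 s.2 * H' s) := by
      simp only [← Finset.sum_sub_distrib, ← Finset.sum_add_distrib]
      refine Finset.sum_congr rfl fun k _ => Finset.sum_congr rfl fun l _ => ?_
      simp only [D]; ring
    have b1 := hc F' H' (fun r => hF _) (fun r => hH _)
    have b2 : |∑ r : Fin n × Fin n, ∑ s : Fin n × Fin n,
            (A r.1 s.1 - a (p r.1) (p s.1)) * (X r.1 r.2 * F' r) * (X s.1 s.2 * H' s)| ≤ ε := by
      have := hAa.scaled hn (fun i => ∑ u, X i u * F' (i, u)) (fun i => ∑ u, X i u * H' (i, u))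
        (fun i => hbound _ _ (hX i) (hXr i) (fun u => hF _))
        (fun i => hbound _ _ (hX i) (hXr i) (fun u => hH _))
      convert this using 2
      rw [Fintype.sum_prod_type]
      refine Finset.sum_congr rfl fun i _ => ?_
      simp_rw [Fintype.sum_prod_type]
      rw [Finset.sum_comm]
      refine Finset.sum_congr rfl fun j _ => ?_
      simp only [Finset.mul_sum, Finset.sum_mul]
      rw [Finset.sum_comm]
    have b3 : |∑ r : Fin n × Fin n, ∑ s : Fin n × Fin n,
            (B r.2 s.2 - b (q r.2) (q s.2)) * (X r.1 r.2 * F' r) * (X s.1 s.2 * H' s)| ≤ ε := by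
      have := hBb.scaled hn (fun i => ∑ u, X u i * F' (u, i)) (fun i => ∑ u, X u i * H' (u, i))
        (fun i => hbound _ _ (fun u => hX u i) (hXc i) (fun u => hF _))
        (fun i => hbound _ _ (fun u => hX u i) (hXc i) (fun u => hH _))
      convert this using 2
      rw [Fintype.sum_prod_type_right]
      refine Finset.sum_congr rfl fun i _ => ?_
      simp_rw [Fintype.sum_prod_type_right]
      rw [Finset.sum_comm]
      refine Finset.sum_congr rfl fun j _ => ?_
      simp only [Finset.mul_sum, Finset.sum_mul]
      rw [Finset.sum_comm]
    rw [e0, e1]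
    rw [abs_le] at b1 b2 b3 ⊢
    constructor <;> linarith [b1.1, b1.2, b2.1, b2.2, b3.1, b3.2]
  have hYV : |∑ k, ∑ l, D k l * (y k * F k) * (y l * H l)
      - ∑ k, ∑ l, D k l * (x k * F k) * (x l * H l)| ≤ 8 * N * ε * 16^N / n := by
    have hpt : ∀ k l, |D k l * (y k * F k) * (y l * H l) - D k l * (x k * F k) * (x l * H l)| ≤
        2 * (N * ε) * (|y k - x k| * y l + x k * |y l - x l|) := by
      intro k l
      have : D k l * (y k * F k) * (y l * H l) - D k l * (x k * F k) * (x l * H l) =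
        D k l * ((y k - x k) * y l + x k * (y l - x l)) * (F k * H l) := by ring
      rw [this, abs_mul, abs_mul]
      have hFH : |F k * H l| ≤ 1 := by
        rw [abs_of_nonneg (mul_nonneg (hF k).1 (hH l).1)]
        exact mul_le_one₀ (hF k).2 (hH l).1 (hH l).2
      have h3 : |(y k - x k) * y l + x k * (y l - x l)| ≤ |y k - x k| * y l + x k * |y l - x l| := by
        refine (abs_add_le _ _).trans ?_
        rw [abs_mul, abs_mul, abs_of_nonneg (hy0 l), abs_of_nonneg (hx0 k)]
      calc _ ≤ (2 * (N * ε) * (|y k - x k| * y l + x k * |y l - x l|)) * 1 := by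
            have h0 := (abs_nonneg _).trans h3
            exact mul_le_mul (mul_le_mul (hD k l) h3 (abs_nonneg _) (by positivity)) hFH
              (abs_nonneg _) (mul_nonneg (by positivity) h0)
        _ = _ := mul_one _
    rw [← Finset.sum_sub_distrib]
    simp_rw [← Finset.sum_sub_distrib]
    calc _ ≤ ∑ k, ∑ l, 2 * (N * ε) * (|y k - x k| * y l + x k * |y l - x l|) := by
          refine (Finset.abs_sum_le_sum_abs _ _).trans (Finset.sum_le_sum fun k _ => ?_)
          exact (Finset.abs_sum_le_sum_abs _ _).trans (Finset.sum_le_sum fun l _ => hpt k l)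
      _ = 2 * (N * ε) * (2 * ∑ k, |y k - x k|) := by
          simp_rw [← Finset.mul_sum, Finset.sum_add_distrib, ← Finset.mul_sum, ← Finset.sum_mul,
            hsx, hsy]
          ring
      _ ≤ 2 * (N * ε) * (2 * (2 * 16^N / n)) := by gcongr
      _ = _ := by ring
  have eY : ∑ u, ∑ v, D (τ u) (τ v) * f u * g v =
      (n:ℝ)^2 * ∑ k, ∑ l, D k l * (y k * F k) * (y l * H l) := by
    rw [dbl_fiber τ f g D, Finset.mul_sum]
    simp_rw [Finset.mul_sum (a := (n:ℝ)^2)]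
    refine Finset.sum_congr rfl fun k _ => Finset.sum_congr rfl fun l _ => ?_
    rw [hFe, hHe]
    simp only [y]
    field_simp
  have bY : |∑ u, ∑ v, D (τ u) (τ v) * f u * g v| ≤
      (c + 2 * ε + 8 * N * ε * 16^N / n) * (n:ℝ)^2 := by
    rw [eY, abs_mul, abs_of_pos (by positivity), mul_comm]
    refine mul_le_mul_of_nonneg_right ?_ (by positivity)
    rw [abs_le] at hV hYV ⊢
    constructor <;> linarith [hV.1, hV.2, hYV.1, hYV.2]
  have bA := hAa (fun i => f (π.symm i)) (fun i => g (π.symm i)) (fun i => hf _) (fun i => hg _)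
  have eA : ∑ i, ∑ j, (A i j - a (p i) (p j)) * f (π.symm i) * g (π.symm j) =
      ∑ u, ∑ v, (A (π u) (π v) - a (p (π u)) (p (π v))) * f u * g v := by
    rw [← Equiv.sum_comp π]
    refine Finset.sum_congr rfl fun i _ => ?_
    rw [← Equiv.sum_comp π]
    simp
  rw [eA] at bA
  have bB := hBb f g hf hg
  have eT : ∑ u, ∑ v, (A (π u) (π v) - B u v) * f u * g v =
      ∑ u, ∑ v, (A (π u) (π v) - a (p (π u)) (p (π v))) * f u * g v
      + ∑ u, ∑ v, D (τ u) (τ v) * f u * g v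
      - ∑ u, ∑ v, (B u v - b (q u) (q v)) * f u * g v := by
    simp only [← Finset.sum_sub_distrib, ← Finset.sum_add_distrib]
    refine Finset.sum_congr rfl fun k _ => Finset.sum_congr rfl fun l _ => ?_
    simp only [D, τ]; ring
  rw [eT]
  rw [abs_le] at bA bB bY ⊢
  constructor <;> nlinarith [bA.1, bA.2, bB.1, bB.2, bY.1, bY.2]

theorem one_dim (h : ℝ → ℝ) (hm : Measurable h) (C : ℝ) (hC : ∀ x, |h x| ≤ C)
    (μ : Measure ℝ) (hμ : μ ≤ volume.restrict (Icc (0:ℝ) 1)) :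
    ∃ P : Set ℝ, MeasurableSet P ∧ P ⊆ Icc 0 1 ∧ ∫ x, h x ∂μ ≤ ∫ x in P, h x := by
  have : IsFiniteMeasure μ := isFiniteMeasure_of_le _ hμ
  have hP : MeasurableSet {x | 0 < h x} := measurableSet_lt measurable_const hm
  refine ⟨{x | 0 < h x} ∩ Icc 0 1, hP.inter measurableSet_Icc, inter_subset_right, ?_⟩
  have hintg : ∀ (ρ : Measure ℝ) [IsFiniteMeasure ρ], Integrable h ρ := fun ρ _ =>
    Integrable.of_bound hm.aestronglyMeasurable C (Eventually.of_forall hC)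
  have hle : ∀ x, h x ≤ {x | 0 < h x}.indicator h x := by
    intro x
    by_cases hx : 0 < h x
    · rw [indicator_of_mem (by exact hx)]
    · rw [indicator_of_notMem (by exact hx)]; exact not_lt.1 hx
  have hnn : ∀ x, 0 ≤ {x | 0 < h x}.indicator h x := by
    intro x
    exact indicator_nonneg (fun y hy => le_of_lt hy) x
  calc ∫ x, h x ∂μ ≤ ∫ x, {x | 0 < h x}.indicator h x ∂μ :=
        integral_mono (hintg μ) ((hintg μ).indicator hP) hle
    _ ≤ ∫ x in Icc (0:ℝ) 1, {x | 0 < h x}.indicator h x :=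
        integral_mono_measure hμ (Eventually.of_forall hnn) ((hintg _).indicator hP)
    _ = ∫ x in {x | 0 < h x} ∩ Icc 0 1, h x := by
        rw [setIntegral_indicator hP, inter_comm]

theorem two_dim (V : ℝ → ℝ → ℝ) (hm : Measurable (Function.uncurry V)) (C : ℝ)
    (hC : ∀ x y, |V x y| ≤ C) (μ ν : Measure ℝ) (hμ : μ ≤ volume.restrict (Icc (0:ℝ) 1))
    (hν : ν ≤ volume.restrict (Icc (0:ℝ) 1)) :
    ∃ S T : Set ℝ, MeasurableSet S ∧ MeasurableSet T ∧ S ⊆ Icc 0 1 ∧ T ⊆ Icc 0 1 ∧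
      ∫ p, V p.1 p.2 ∂(μ.prod ν) ≤ ∫ p in S ×ˢ T, V p.1 p.2 := by
  have : IsFiniteMeasure μ := isFiniteMeasure_of_le _ hμ
  have : IsFiniteMeasure ν := isFiniteMeasure_of_le _ hν
  have hintg : ∀ (ρ : Measure (ℝ × ℝ)) [IsFiniteMeasure ρ],
      Integrable (fun p : ℝ × ℝ => V p.1 p.2) ρ := fun ρ _ =>
    Integrable.of_bound hm.aestronglyMeasurable C (Eventually.of_forall fun p => hC p.1 p.2)
  have hbd : ∀ (ρ : Measure ℝ) [IsFiniteMeasure ρ] (v : ℝ → ℝ), (∀ y, |v y| ≤ C) →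
      |∫ y, v y ∂ρ| ≤ C * ρ.real univ := by
    intro ρ _ v hv
    exact norm_integral_le_of_norm_le_const (f := v) (Eventually.of_forall hv)
  obtain ⟨P, hP, hPI, hle1⟩ := one_dim (fun x => ∫ y, V x y ∂ν)
    (hm.stronglyMeasurable.integral_prod_right).measurable (C * ν.real univ)
    (fun x => hbd ν _ (hC x)) μ hμ
  have : IsFiniteMeasure (volume.restrict P) :=
    isFiniteMeasure_of_le _ (Measure.restrict_mono hPI le_rfl)
  obtain ⟨Q, hQ, hQI, hle2⟩ := one_dim (fun y => ∫ x in P, V x y)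
    (hm.stronglyMeasurable.integral_prod_left').measurable (C * (volume.restrict P).real univ)
    (fun y => hbd _ _ (fun x => hC x y)) ν hν
  have : IsFiniteMeasure (volume.restrict Q) :=
    isFiniteMeasure_of_le _ (Measure.restrict_mono hQI le_rfl)
  refine ⟨P, Q, hP, hQ, hPI, hQI, ?_⟩
  calc ∫ p, V p.1 p.2 ∂(μ.prod ν) = ∫ x, ∫ y, V x y ∂ν ∂μ := integral_prod _ (hintg _)
    _ ≤ ∫ x in P, ∫ y, V x y ∂ν := hle1
    _ = ∫ y, (∫ x in P, V x y) ∂ν := integral_integral_swap (hintg _)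
    _ ≤ ∫ y in Q, ∫ x in P, V x y := hle2
    _ = ∫ p, V p.1 p.2 ∂((volume.restrict P).prod (volume.restrict Q)) :=
        (integral_prod_symm _ (hintg _)).symm
    _ = ∫ p in P ×ˢ Q, V p.1 p.2 := by
        rw [Measure.prod_restrict]; rfl

theorem vol_prod_le {S T : Set ℝ} (hS : S ⊆ Icc 0 1) (hT : T ⊆ Icc 0 1) :
    (volume : Measure (ℝ × ℝ)) (S ×ˢ T) ≤ 1 := by
  calc (volume : Measure (ℝ × ℝ)) (S ×ˢ T) ≤ volume (Icc (0:ℝ) 1 ×ˢ Icc (0:ℝ) 1) :=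
        measure_mono (prod_mono hS hT)
    _ = 1 := by rw [Measure.volume_eq_prod, Measure.prod_prod]; simp

theorem abs_int_le {U : ℝ → ℝ → ℝ} {C : ℝ} (hC : ∀ x y, |U x y| ≤ C) {S T : Set ℝ}
    (hS : S ⊆ Icc 0 1) (hT : T ⊆ Icc 0 1) : |∫ p in S ×ˢ T, U p.1 p.2| ≤ C := by
  have h1 := vol_prod_le hS hT
  have hC0 : 0 ≤ C := (abs_nonneg _).trans (hC 0 0)
  have := norm_setIntegral_le_of_norm_le_const (μ := (volume : Measure (ℝ × ℝ)))
    (s := S ×ˢ T) (f := fun p => U p.1 p.2) (C := C)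
    (h1.trans_lt ENNReal.one_lt_top) (fun p _ => hC p.1 p.2)
  rw [Real.norm_eq_abs] at this
  refine this.trans ?_
  have : (volume : Measure (ℝ × ℝ)).real (S ×ˢ T) ≤ 1 :=
    ENNReal.toReal_le_of_le_ofReal zero_le_one (by simpa using h1)
  nlinarith

theorem cut_ge {U : ℝ → ℝ → ℝ} {C : ℝ} (hC : ∀ x y, |U x y| ≤ C) {S T : Set ℝ}
    (hSm : MeasurableSet S) (hTm : MeasurableSet T)
    (hS : S ⊆ Icc 0 1) (hT : T ⊆ Icc 0 1) : |∫ p in S ×ˢ T, U p.1 p.2| ≤ cutNorm U := by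
  refine le_csSup ⟨C, ?_⟩ ⟨S, T, hSm, hTm, hS, hT, rfl⟩
  rintro r ⟨S', T', _, _, hS', hT', rfl⟩
  exact abs_int_le hC hS' hT'

theorem cut_le {U : ℝ → ℝ → ℝ} {c : ℝ} (h : ∀ S T : Set ℝ, MeasurableSet S → MeasurableSet T →
    S ⊆ Icc 0 1 → T ⊆ Icc 0 1 → |∫ p in S ×ˢ T, U p.1 p.2| ≤ c) : cutNorm U ≤ c := by
  refine csSup_le ⟨_, ∅, ∅, MeasurableSet.empty, MeasurableSet.empty, by simp, by simp, rfl⟩ ?_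
  rintro r ⟨S', T', hS, hT, hS', hT', rfl⟩
  exact h S' T' hS hT hS' hT'

theorem cut_nonneg (U : ℝ → ℝ → ℝ) : 0 ≤ cutNorm U := by
  refine Real.sSup_nonneg ?_
  rintro r ⟨S', T', _, _, hS', hT', rfl⟩
  exact abs_nonneg _

theorem cut_pull {V : ℝ → ℝ → ℝ} (hm : Measurable (Function.uncurry V)) {C : ℝ}
    (hC : ∀ x y, |V x y| ≤ C) {σ : ℝ → ℝ} (hσ : IsMPSelf σ) {S T : Set ℝ}
    (hS : S ⊆ Icc 0 1) (hT : T ⊆ Icc 0 1) :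
    |∫ p in S ×ˢ T, V (σ p.1) (σ p.2)| ≤ cutNorm V := by
  have hσm : Measurable σ := hσ.1.measurable
  have hle : ∀ {S : Set ℝ}, S ⊆ Icc 0 1 →
      (volume.restrict S).map σ ≤ volume.restrict (Icc (0:ℝ) 1) := by
    intro S hS
    calc (volume.restrict S).map σ ≤ (volume.restrict (Icc (0:ℝ) 1)).map σ :=
          Measure.map_mono (Measure.restrict_mono hS le_rfl) hσm
      _ = _ := hσ.1.map_eq
  have e : ∀ (V : ℝ → ℝ → ℝ), Measurable (Function.uncurry V) →
      ∫ p in S ×ˢ T, V (σ p.1) (σ p.2) = ∫ p, V p.1 p.2 ∂(((volume.restrict S).map σ).prod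
        ((volume.restrict T).map σ)) := by
    intro V hm
    rw [Measure.map_prod_map _ _ hσm hσm, integral_map (f := fun p : ℝ × ℝ => V p.1 p.2)
      (hσm.prodMap hσm).aemeasurable hm.aestronglyMeasurable, Measure.prod_restrict]
    rfl
  rw [abs_le']
  constructor
  · obtain ⟨P, Q, hP, hQ, hP', hQ', h⟩ := two_dim V hm C hC _ _ (hle hS) (hle hT)
    rw [e V hm]
    exact h.trans ((le_abs_self _).trans (cut_ge hC hP hQ hP' hQ'))
  · have hm' : Measurable (Function.uncurry fun x y => - V x y) := hm.neg
    obtain ⟨P, Q, hP, hQ, hP', hQ', h⟩ := two_dim (fun x y => - V x y) hm' C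
      (fun x y => by rw [abs_neg]; exact hC x y) _ _ (hle hS) (hle hT)
    rw [← integral_neg, e _ hm']
    refine h.trans ?_
    rw [integral_neg]
    exact (neg_le_abs _).trans (cut_ge hC hP hQ hP' hQ')

theorem step_int {ι : Type*} [Fintype ι] [DecidableEq ι] [MeasurableSpace ι]
    [MeasurableSingletonClass ι] (φ : ℝ → ι) (hφ : Measurable φ) (M : ι → ι → ℝ) {S T : Set ℝ}
    (hS : S ⊆ Icc 0 1) (hT : T ⊆ Icc 0 1) :
    ∫ p in S ×ˢ T, M (φ p.1) (φ p.2) =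
      ∑ i, ∑ j, M i j * volume.real (S ∩ φ ⁻¹' {i}) * volume.real (T ∩ φ ⁻¹' {j}) := by
  classical
  have : IsFiniteMeasure ((volume : Measure (ℝ × ℝ)).restrict (S ×ˢ T)) :=
    ⟨by rw [Measure.restrict_apply_univ]; exact (vol_prod_le hS hT).trans_lt ENNReal.one_lt_top⟩
  have hpt : ∀ p : ℝ × ℝ, M (φ p.1) (φ p.2) = ∑ i, ∑ j, M i j *
      ((φ ⁻¹' {i}).indicator (fun _ => (1:ℝ)) p.1 * (φ ⁻¹' {j}).indicator (fun _ => (1:ℝ)) p.2) := by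
    intro p
    simp [Set.indicator_apply, Finset.sum_ite_eq]
  have hmi : ∀ i, MeasurableSet (φ ⁻¹' {i}) := fun i => hφ (measurableSet_singleton i)
  have hintg : ∀ i j, Integrable (fun p : ℝ × ℝ => M i j *
      ((φ ⁻¹' {i}).indicator (fun _ => (1:ℝ)) p.1 * (φ ⁻¹' {j}).indicator (fun _ => (1:ℝ)) p.2))
      (volume.restrict (S ×ˢ T)) := by
    intro i j
    refine Integrable.const_mul (Integrable.of_bound (C := 1) ?_ ?_) _
    · exact (((measurable_const.indicator (hmi i)).comp measurable_fst).mul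
        ((measurable_const.indicator (hmi j)).comp measurable_snd)).aestronglyMeasurable
    · refine Eventually.of_forall fun p => ?_
      simp only [Set.indicator_apply]
      split_ifs <;> simp
  simp_rw [hpt]
  rw [integral_finsetSum _ (fun i _ => integrable_finsetSum _ fun j _ => hintg i j)]
  refine Finset.sum_congr rfl fun i _ => ?_
  rw [integral_finsetSum _ (fun j _ => hintg i j)]
  refine Finset.sum_congr rfl fun j _ => ?_
  rw [integral_const_mul, Measure.volume_eq_prod, setIntegral_prod_mul,
    setIntegral_indicator (hmi i), setIntegral_indicator (hmi j)]
  simp [mul_assoc]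

/-- index of the interval containing `x`. -/
def idx {n : ℕ} (hn : 0 < n) (x : ℝ) : Fin n :=
  ⟨min (⌈(n:ℝ) * x⌉₊ - 1) (n - 1), by omega⟩

theorem idx_measurable {n : ℕ} (hn : 0 < n) : Measurable (idx hn) := by
  have h : Measurable (fun k : ℕ => (⟨min (k - 1) (n - 1), by omega⟩ : Fin n)) :=
    measurable_from_nat
  exact h.comp (Nat.measurable_ceil.comp (measurable_const.mul measurable_id))

theorem idx_eq_iff {n : ℕ} (hn : 0 < n) {x : ℝ} (hx : x ∈ Ioc (0:ℝ) 1) (i : Fin n) :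
    idx hn x = i ↔ ((i:ℕ):ℝ) < n * x ∧ (n:ℝ) * x ≤ ((i:ℕ):ℝ) + 1 := by
  have hn' : (0:ℝ) < n := by exact_mod_cast hn
  have h1 : 0 < ⌈(n:ℝ) * x⌉₊ := Nat.ceil_pos.2 (mul_pos hn' hx.1)
  have h2 : ⌈(n:ℝ) * x⌉₊ ≤ n := Nat.ceil_le.2 (by nlinarith [hx.2])
  have h3 : idx hn x = i ↔ ⌈(n:ℝ) * x⌉₊ = (i:ℕ) + 1 := by
    rw [Fin.ext_iff]
    simp only [idx]
    omega
  rw [h3, Nat.ceil_eq_iff (by omega)]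
  push_cast
  simp

theorem mem_I_iff {n : ℕ} (hn : 0 < n) (x : ℝ) (i : Fin n) :
    x ∈ Ioc (((i : ℕ) : ℝ)/n) ((((i : ℕ) : ℝ) + 1)/n) ↔
      ((i:ℕ):ℝ) < n * x ∧ (n:ℝ) * x ≤ ((i:ℕ):ℝ) + 1 := by
  have hn' : (0:ℝ) < n := by exact_mod_cast hn
  rw [mem_Ioc, div_lt_iff₀ hn', le_div_iff₀ hn', mul_comm x]

theorem mem_Ioc_of {n : ℕ} (hn : 0 < n) {x : ℝ} {i : Fin n}
    (h : x ∈ Ioc (((i : ℕ) : ℝ)/n) ((((i : ℕ) : ℝ) + 1)/n)) : x ∈ Ioc (0:ℝ) 1 := by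
  have hn' : (0:ℝ) < n := by exact_mod_cast hn
  refine ⟨lt_of_le_of_lt (by positivity) h.1, h.2.trans ?_⟩
  rw [div_le_one hn']
  have := i.2
  exact_mod_cast this

theorem mem_I_idx {n : ℕ} (hn : 0 < n) (x : ℝ) (i : Fin n) :
    x ∈ Ioc (((i : ℕ) : ℝ)/n) ((((i : ℕ) : ℝ) + 1)/n) ↔ x ∈ Ioc (0:ℝ) 1 ∧ idx hn x = i := by
  constructor
  · intro h
    have hx := mem_Ioc_of hn h
    exact ⟨hx, (idx_eq_iff hn hx i).2 ((mem_I_iff hn x i).1 h)⟩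
  · rintro ⟨hx, h⟩
    exact (mem_I_iff hn x i).2 ((idx_eq_iff hn hx i).1 h)

theorem vol_idx {n : ℕ} (hn : 0 < n) (i : Fin n) :
    volume (Ioc (0:ℝ) 1 ∩ idx hn ⁻¹' {i}) = ENNReal.ofReal (1 / n) := by
  have : Ioc (0:ℝ) 1 ∩ idx hn ⁻¹' {i} = Ioc (((i : ℕ) : ℝ)/n) ((((i : ℕ) : ℝ) + 1)/n) := by
    ext x
    rw [mem_I_idx hn]
    rfl
  rw [this, Real.volume_Ioc]
  congr 1
  ring

open Classical in
/-- adjacency matrix -/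
def adjM {n : ℕ} (G : SimpleGraph (Fin n)) : Fin n → Fin n → ℝ := fun i j =>
  if G.Adj i j then 1 else 0

theorem adjM_mem {n : ℕ} (G : SimpleGraph (Fin n)) (i j : Fin n) :
    adjM G i j ∈ Icc (0:ℝ) 1 := by
  unfold adjM
  split_ifs <;> simp

theorem gog_eq {n : ℕ} (hn : 0 < n) (G : SimpleGraph (Fin n)) {x y : ℝ} (hx : x ∈ Ioc (0:ℝ) 1)
    (hy : y ∈ Ioc (0:ℝ) 1) : graphonOfGraph G x y = adjM G (idx hn x) (idx hn y) := by
  have h : ∀ {z : ℝ}, z ∈ Ioc (0:ℝ) 1 → ∀ i : Fin n,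
      ⌈(n : ℝ) * z⌉ = ((i : ℕ) : ℤ) + 1 ↔ idx hn z = i := by
    intro z hz i
    rw [idx_eq_iff hn hz, Int.ceil_eq_iff]
    push_cast
    simp
  have hiff : (∃ i j : Fin n, G.Adj i j ∧ ⌈(n : ℝ) * x⌉ = ((i : ℕ) : ℤ) + 1 ∧
      ⌈(n : ℝ) * y⌉ = ((j : ℕ) : ℤ) + 1) ↔ G.Adj (idx hn x) (idx hn y) := by
    constructor
    · rintro ⟨i, j, hij, h1, h2⟩
      rw [(h hx i).1 h1, (h hy j).1 h2]
      exact hij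
    · intro hij
      exact ⟨_, _, hij, (h hx _).2 rfl, (h hy _).2 rfl⟩
  unfold graphonOfGraph adjM
  by_cases hadj : G.Adj (idx hn x) (idx hn y)
  · rw [if_pos (hiff.2 hadj), if_pos hadj]
  · rw [if_neg (fun h => hadj (hiff.1 h)), if_neg hadj]

theorem gog_measurable {n : ℕ} (G : SimpleGraph (Fin n)) :
    Measurable (Function.uncurry (graphonOfGraph G)) := by
  classical
  let k : ℤ × ℤ → ℝ := fun z => if ∃ i j : Fin n, G.Adj i j ∧ z.1 = ((i : ℕ) : ℤ) + 1 ∧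
      z.2 = ((j : ℕ) : ℤ) + 1 then 1 else 0
  have hk : Measurable k := measurable_of_countable k
  have hg : Measurable (fun p : ℝ × ℝ => (⌈(n:ℝ) * p.1⌉, ⌈(n:ℝ) * p.2⌉)) :=
    (Int.measurable_ceil.comp (measurable_const.mul measurable_fst)).prodMk
      (Int.measurable_ceil.comp (measurable_const.mul measurable_snd))
  convert hk.comp hg using 1
  funext p
  simp only [Function.uncurry, graphonOfGraph, k, Function.comp]

theorem gog_mem {n : ℕ} (G : SimpleGraph (Fin n)) (x y : ℝ) :
    graphonOfGraph G x y ∈ Icc (0:ℝ) 1 := by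
  unfold graphonOfGraph
  split_ifs <;> simp

/-- block averages -/
def avgM (n : ℕ) (W : ℝ → ℝ → ℝ) : Fin n → Fin n → ℝ := fun i j =>
  ⨍ p in (Ioc (((i : ℕ) : ℝ)/n) ((((i : ℕ) : ℝ) + 1)/n)) ×ˢ
    (Ioc (((j : ℕ) : ℝ)/n) ((((j : ℕ) : ℝ) + 1)/n)), W p.1 p.2

theorem avgM_mem {n : ℕ} {W : ℝ → ℝ → ℝ} (hW : IsGraphon W) (i j : Fin n) :
    avgM n W i j ∈ Icc (0:ℝ) 1 := by
  unfold avgM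
  rw [setAverage_eq, smul_eq_mul]
  set s := (Ioc (((i : ℕ) : ℝ)/n) ((((i : ℕ) : ℝ) + 1)/n)) ×ˢ
    (Ioc (((j : ℕ) : ℝ)/n) ((((j : ℕ) : ℝ) + 1)/n)) with hs
  have hfin : (volume : Measure (ℝ × ℝ)) s < ⊤ := by
    rw [hs, Measure.volume_eq_prod, Measure.prod_prod, Real.volume_Ioc, Real.volume_Ioc]
    exact ENNReal.mul_lt_top ENNReal.ofReal_lt_top ENNReal.ofReal_lt_top
  have h0 : 0 ≤ ∫ p in s, W p.1 p.2 := integral_nonneg fun p => (hW.2.2 p.1 p.2).1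
  have h1 : ∫ p in s, W p.1 p.2 ≤ (volume : Measure (ℝ × ℝ)).real s := by
    have := norm_setIntegral_le_of_norm_le_const (μ := (volume : Measure (ℝ × ℝ)))
      (s := s) (f := fun p => W p.1 p.2) (C := 1) hfin (fun p _ => by
        rw [Real.norm_eq_abs, abs_of_nonneg (hW.2.2 p.1 p.2).1]; exact (hW.2.2 p.1 p.2).2)
    rw [one_mul] at this
    exact (le_abs_self _).trans this
  refine ⟨mul_nonneg (inv_nonneg.2 measureReal_nonneg) h0, ?_⟩
  rw [inv_mul_eq_div]
  exact div_le_one_of_le₀ h1 measureReal_nonneg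

theorem bar_eq {n : ℕ} (hn : 0 < n) (W : ℝ → ℝ → ℝ) {x y : ℝ} (hx : x ∈ Ioc (0:ℝ) 1)
    (hy : y ∈ Ioc (0:ℝ) 1) : barStep n W x y = avgM n W (idx hn x) (idx hn y) := by
  unfold barStep condExpPart
  simp only [mem_I_idx hn, hx, hy, true_and]
  rw [Finset.sum_eq_single (idx hn x), Finset.sum_eq_single (idx hn y)]
  · simp [avgM]
  · intro j _ hj
    simp [hj.symm]
  · simp
  · intro j _ hj
    simp [hj.symm]
  · simp

theorem bar_mem {n : ℕ} (hn : 0 < n) {W : ℝ → ℝ → ℝ} (hW : IsGraphon W) (x y : ℝ) :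
    barStep n W x y ∈ Icc (0:ℝ) 1 := by
  by_cases h : x ∈ Ioc (0:ℝ) 1 ∧ y ∈ Ioc (0:ℝ) 1
  · rw [bar_eq hn W h.1 h.2]
    exact avgM_mem hW _ _
  · have : barStep n W x y = 0 := by
      unfold barStep condExpPart
      refine Finset.sum_eq_zero fun i _ => Finset.sum_eq_zero fun j _ => ?_
      rw [if_neg]
      rintro ⟨h1, h2⟩
      exact h ⟨mem_Ioc_of hn h1, mem_Ioc_of hn h2⟩
    rw [this]
    simp

theorem bar_measurable (n : ℕ) (W : ℝ → ℝ → ℝ) :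
    Measurable (Function.uncurry (barStep n W)) := by
  unfold barStep condExpPart Function.uncurry
  refine Finset.measurable_sum _ fun i _ => Finset.measurable_sum _ fun j _ => ?_
  refine Measurable.ite ?_ measurable_const measurable_const
  exact measurableSet_Ioc.prod measurableSet_Ioc

theorem abs_sub_le_one' {a b : ℝ} (ha : a ∈ Icc (0:ℝ) 1) (hb : b ∈ Icc (0:ℝ) 1) :
    |a - b| ≤ 1 := by
  rw [abs_le]
  constructor <;> linarith [ha.1, ha.2, hb.1, hb.2]

theorem int_on {U : ℝ → ℝ → ℝ} (hm : Measurable (Function.uncurry U)) {C : ℝ}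
    (hC : ∀ x y, |U x y| ≤ C) {S T : Set ℝ} (hS : S ⊆ Icc 0 1) (hT : T ⊆ Icc 0 1) :
    IntegrableOn (fun p : ℝ × ℝ => U p.1 p.2) (S ×ˢ T) := by
  have : IsFiniteMeasure ((volume : Measure (ℝ × ℝ)).restrict (S ×ˢ T)) :=
    ⟨by rw [Measure.restrict_apply_univ]; exact (vol_prod_le hS hT).trans_lt ENNReal.one_lt_top⟩
  exact Integrable.of_bound hm.aestronglyMeasurable C (Eventually.of_forall fun p => hC p.1 p.2)

/-- From a matrix bound to a bound on `dCut`. -/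
theorem dCut_of_cutLe {W : ℝ → ℝ → ℝ} (hW : IsGraphon W) {n : ℕ} (hn : 0 < n)
    (G : SimpleGraph (Fin n)) (d : ℝ)
    (hd : CutLe (fun u v => adjM G u v - avgM n W u v) (d * (n:ℝ)^2)) :
    dCut (graphonOfGraph G) W ≤ d + dCut W (barStep n W) := by
  have hn' : (0:ℝ) < n := by exact_mod_cast hn
  refine cut_le fun S T hS hT hSI hTI => ?_
  have hII : Ioc (0:ℝ) 1 ⊆ Icc 0 1 := Ioc_subset_Icc_self
  have hae : ∀ S : Set ℝ, S ⊆ Icc 0 1 → (S : Set ℝ) =ᵐ[volume] (S ∩ Ioc 0 1 : Set ℝ) := by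
    intro S hSI
    have h1 : (S ∩ Icc 0 1 : Set ℝ) =ᵐ[volume] (S ∩ Ioc 0 1 : Set ℝ) :=
      (ae_eq_refl S).inter Ioc_ae_eq_Icc.symm
    rwa [inter_eq_left.2 hSI] at h1
  have hprod : (S ×ˢ T : Set (ℝ × ℝ)) =ᵐ[volume] ((S ∩ Ioc 0 1) ×ˢ (T ∩ Ioc 0 1) : Set (ℝ × ℝ)) :=
    Measure.set_prod_ae_eq (hae S hSI) (hae T hTI)
  rw [setIntegral_congr_set hprod]
  have hS' : MeasurableSet (S ∩ Ioc 0 1) := hS.inter measurableSet_Ioc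
  have hT' : MeasurableSet (T ∩ Ioc 0 1) := hT.inter measurableSet_Ioc
  have hSI' : S ∩ Ioc 0 1 ⊆ Icc 0 1 := inter_subset_right.trans hII
  have hTI' : T ∩ Ioc 0 1 ⊆ Icc 0 1 := inter_subset_right.trans hII
  have i1 := int_on (U := fun x y => graphonOfGraph G x y - barStep n W x y) ((gog_measurable G).sub (bar_measurable n W))
    (fun x y => abs_sub_le_one' (gog_mem G x y) (bar_mem hn hW x y)) hSI' hTI'
  have i2 := int_on (U := fun x y => W x y - barStep n W x y) (hW.2.1.sub (bar_measurable n W))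
    (fun x y => abs_sub_le_one' (hW.2.2 x y) (bar_mem hn hW x y)) hSI' hTI'
  have e : ∫ p in (S ∩ Ioc 0 1) ×ˢ (T ∩ Ioc 0 1), (graphonOfGraph G p.1 p.2 - W p.1 p.2) =
      (∫ p in (S ∩ Ioc 0 1) ×ˢ (T ∩ Ioc 0 1), (graphonOfGraph G p.1 p.2 - barStep n W p.1 p.2))
      - ∫ p in (S ∩ Ioc 0 1) ×ˢ (T ∩ Ioc 0 1), (W p.1 p.2 - barStep n W p.1 p.2) := by
    rw [← integral_sub i1 i2]
    refine integral_congr_ae (Eventually.of_forall fun p => ?_)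
    simp
  have e2 : ∫ p in (S ∩ Ioc 0 1) ×ˢ (T ∩ Ioc 0 1), (graphonOfGraph G p.1 p.2 - barStep n W p.1 p.2)
      = ∫ p in (S ∩ Ioc 0 1) ×ˢ (T ∩ Ioc 0 1),
        (fun u v => adjM G u v - avgM n W u v) (idx hn p.1) (idx hn p.2) := by
    refine setIntegral_congr_fun (hS'.prod hT') fun p hp => ?_
    simp only
    rw [gog_eq hn G hp.1.2 hp.2.2, bar_eq hn W hp.1.2 hp.2.2]
  rw [step_int (idx hn) (idx_measurable hn) (fun u v => adjM G u v - avgM n W u v)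
    hSI' hTI'] at e2
  have hvol : ∀ S : Set ℝ, ∀ i, volume.real (S ∩ Ioc 0 1 ∩ idx hn ⁻¹' {i}) ∈
      Icc (0:ℝ) (1 / n) := by
    intro S i
    refine ⟨measureReal_nonneg, ?_⟩
    refine ENNReal.toReal_le_of_le_ofReal (by positivity) ?_
    rw [← vol_idx hn i]
    exact measure_mono (inter_subset_inter_left _ inter_subset_right)
  have b1 := hd.scaled hn (fun i => volume.real (S ∩ Ioc 0 1 ∩ idx hn ⁻¹' {i}))
    (fun i => volume.real (T ∩ Ioc 0 1 ∩ idx hn ⁻¹' {i})) (hvol S) (hvol T)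
  rw [← e2] at b1
  have b2 : |∫ p in (S ∩ Ioc 0 1) ×ˢ (T ∩ Ioc 0 1), (W p.1 p.2 - barStep n W p.1 p.2)|
      ≤ dCut W (barStep n W) :=
    cut_ge (U := fun x y => W x y - barStep n W x y)
      (fun x y => abs_sub_le_one' (hW.2.2 x y) (bar_mem hn hW x y)) hS' hT' hSI' hTI'
  rw [e]
  exact (abs_sub _ _).trans (add_le_add b1 b2)

theorem overlay {W : ℝ → ℝ → ℝ} (hW : IsGraphon W) {n : ℕ} (hn : 0 < n)
    (G : SimpleGraph (Fin n)) {σ₁ σ₂ : ℝ → ℝ} (h₁ : IsMPSelf σ₁) (h₂ : IsMPSelf σ₂) :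
    ∃ X : Fin n → Fin n → ℝ, (∀ i u, 0 ≤ X i u) ∧ (∀ i, ∑ u, X i u = 1 / n) ∧
      (∀ u, ∑ i, X i u = 1 / n) ∧
      CutLe (fun (r s : Fin n × Fin n) =>
        X r.1 r.2 * X s.1 s.2 * (adjM G r.1 s.1 - avgM n W r.2 s.2))
        (cutNorm (fun x y => graphonOfGraph G (σ₁ x) (σ₁ y) - W (σ₂ x) (σ₂ y)) +
          dCut W (barStep n W)) := by
  classical
  have m1 : Measurable σ₁ := h₁.1.measurable
  have m2 : Measurable σ₂ := h₂.1.measurable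
  have k1 : Measurable (fun x => idx hn (σ₁ x)) := (idx_measurable hn).comp m1
  have k2 : Measurable (fun x => idx hn (σ₂ x)) := (idx_measurable hn).comp m2
  let φ : ℝ → Fin n × Fin n := fun x => (idx hn (σ₁ x), idx hn (σ₂ x))
  have hφ : Measurable φ := k1.prodMk k2
  let E : Set ℝ := Ioc 0 1 ∩ (σ₁ ⁻¹' Ioc 0 1 ∩ σ₂ ⁻¹' Ioc 0 1)
  have hEm : MeasurableSet E :=
    measurableSet_Ioc.inter ((m1 measurableSet_Ioc).inter (m2 measurableSet_Ioc))
  have hEI : E ⊆ Icc 0 1 := inter_subset_left.trans Ioc_subset_Icc_self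
  have hae0 : ∀ᵐ x ∂(volume.restrict (Icc (0:ℝ) 1)), x ∈ Ioc (0:ℝ) 1 := by
    rw [← restrict_Ioc_eq_restrict_Icc]
    exact ae_restrict_mem measurableSet_Ioc
  have hae : ∀ᵐ x ∂(volume.restrict (Icc (0:ℝ) 1)), x ∈ E := by
    filter_upwards [hae0, h₁.1.quasiMeasurePreserving.ae hae0,
      h₂.1.quasiMeasurePreserving.ae hae0] with x a b c
    exact ⟨a, b, c⟩
  have hEZ : ∀ Z : Set ℝ, volume (E ∩ Z) = volume.restrict (Icc (0:ℝ) 1) Z := by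
    intro Z
    rw [← Measure.restrict_eq_self volume (inter_subset_left.trans hEI : E ∩ Z ⊆ Icc 0 1)]
    refine measure_congr ?_
    filter_upwards [hae] with x hx
    exact propext ⟨fun h => h.2, fun h => ⟨hx, h⟩⟩
  have hmarg : ∀ {σ : ℝ → ℝ}, IsMPSelf σ → ∀ i,
      volume.real (E ∩ (fun x => idx hn (σ x)) ⁻¹' {i}) = 1 / n := by
    intro σ hσ i
    have hi : MeasurableSet (idx hn ⁻¹' {i}) := idx_measurable hn (measurableSet_singleton i)
    have : volume (E ∩ (fun x => idx hn (σ x)) ⁻¹' {i}) = ENNReal.ofReal (1 / n) := by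
      rw [hEZ]
      have := hσ.1.measure_preimage hi.nullMeasurableSet
      rw [← restrict_Ioc_eq_restrict_Icc] at this ⊢
      rw [Measure.restrict_apply hi, inter_comm, vol_idx] at this
      exact this
    rw [Measure.real, this, ENNReal.toReal_ofReal (by positivity)]
  have hfin : ∀ Z : Set ℝ, volume (E ∩ Z) ≠ ⊤ := by
    intro Z
    rw [hEZ]
    exact measure_ne_top _ _
  have hsum : ∀ (a b : ℝ → Fin n), Measurable a → Measurable b → ∀ i,
      ∑ u, volume.real (E ∩ (a ⁻¹' {i} ∩ b ⁻¹' {u})) = volume.real (E ∩ a ⁻¹' {i}) := by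
    intro a b ha hb i
    have hfinm : IsFiniteMeasure (volume.restrict (E ∩ a ⁻¹' {i})) :=
      ⟨by rw [Measure.restrict_apply_univ]; exact (hfin _).lt_top⟩
    have := sum_measureReal_preimage_singleton (μ := volume.restrict (E ∩ a ⁻¹' {i}))
      (f := b) Finset.univ (fun u _ => hb (measurableSet_singleton u))
    simp only [Finset.coe_univ, preimage_univ, measureReal_restrict_apply MeasurableSet.univ,
      univ_inter] at this
    rw [← this]
    refine Finset.sum_congr rfl fun u _ => ?_
    rw [measureReal_restrict_apply (hb (measurableSet_singleton u))]
    congr 1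
    ext x
    simp only [mem_inter_iff]
    tauto
  let X : Fin n → Fin n → ℝ := fun i u => volume.real (E ∩ φ ⁻¹' {(i, u)})
  have hφe : ∀ i u, φ ⁻¹' {(i, u)} =
      (fun x => idx hn (σ₁ x)) ⁻¹' {i} ∩ (fun x => idx hn (σ₂ x)) ⁻¹' {u} := by
    intro i u
    ext x
    simp [φ]
  refine ⟨X, fun i u => measureReal_nonneg, ?_, ?_, ?_⟩
  · intro i
    simp only [X, hφe]
    rw [hsum _ _ k1 k2, hmarg h₁]
  · intro u
    simp only [X, hφe]
    simp_rw [inter_comm ((fun x => idx hn (σ₁ x)) ⁻¹' _)]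
    rw [hsum _ _ k2 k1, hmarg h₂]
  · refine fin_bilin _ _ fun F H => ?_
    have hSm : ∀ F : Finset (Fin n × Fin n), MeasurableSet (E ∩ φ ⁻¹' (F : Set _)) := fun F =>
      hEm.inter (hφ F.measurableSet)
    have hSI : ∀ F : Finset (Fin n × Fin n), E ∩ φ ⁻¹' (F : Set _) ⊆ Icc 0 1 := fun F =>
      inter_subset_left.trans hEI
    have hv : ∀ (F : Finset (Fin n × Fin n)) r, volume.real (E ∩ φ ⁻¹' (F : Set _) ∩ φ ⁻¹' {r}) =
        if r ∈ F then X r.1 r.2 else 0 := by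
      intro F r
      split_ifs with h
      · simp only [X]
        congr 1
        ext x
        simp only [mem_inter_iff, mem_preimage, mem_singleton_iff, Finset.mem_coe]
        constructor
        · rintro ⟨⟨a, b⟩, c⟩
          exact ⟨a, c⟩
        · rintro ⟨a, c⟩
          exact ⟨⟨a, by rw [c]; exact h⟩, c⟩
      · have : E ∩ φ ⁻¹' (F : Set _) ∩ φ ⁻¹' {r} = ∅ := by
          ext x
          simp only [mem_inter_iff, mem_preimage, mem_singleton_iff, Finset.mem_coe,
            mem_empty_iff_false, iff_false]
          rintro ⟨⟨a, b⟩, c⟩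
          exact h (c ▸ b)
        rw [this]
        simp
    have est := step_int φ hφ (fun r s => adjM G r.1 s.1 - avgM n W r.2 s.2) (hSI F) (hSI H)
    have e1 : ∑ r ∈ F, ∑ s ∈ H, X r.1 r.2 * X s.1 s.2 * (adjM G r.1 s.1 - avgM n W r.2 s.2) =
        ∫ p in (E ∩ φ ⁻¹' (F : Set _)) ×ˢ (E ∩ φ ⁻¹' (H : Set _)),
          (adjM G (φ p.1).1 (φ p.2).1 - avgM n W (φ p.1).2 (φ p.2).2) := by
      rw [est]
      simp only [hv]
      simp only [mul_ite, ite_mul, mul_zero, zero_mul, Finset.sum_ite_mem, Finset.univ_inter]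
      rw [← Finset.sum_filter_add_sum_filter_not Finset.univ (fun r => r ∈ F)]
      simp only [Finset.filter_univ_mem]
      rw [Finset.sum_eq_zero (s := Finset.univ.filter (fun r => r ∉ F)), add_zero]
      · refine Finset.sum_congr rfl fun r hr => Finset.sum_congr rfl fun s hs => ?_
        rw [if_pos hr]
        ring
      · intro r hr
        simp only [Finset.mem_filter] at hr
        refine Finset.sum_eq_zero fun s _ => ?_
        rw [if_neg hr.2]
    have p2 : Measurable (fun p : ℝ × ℝ => (σ₁ p.1, σ₁ p.2)) :=
      (m1.comp measurable_fst).prodMk (m1.comp measurable_snd)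
    have p3 : Measurable (fun p : ℝ × ℝ => (σ₂ p.1, σ₂ p.2)) :=
      (m2.comp measurable_fst).prodMk (m2.comp measurable_snd)
    have bd1 : ∀ x y, |graphonOfGraph G (σ₁ x) (σ₁ y) - W (σ₂ x) (σ₂ y)| ≤ 1 :=
      fun x y => abs_sub_le_one' (gog_mem G _ _) (hW.2.2 _ _)
    have bd2 : ∀ x y, |W x y - barStep n W x y| ≤ 1 :=
      fun x y => abs_sub_le_one' (hW.2.2 _ _) (bar_mem hn hW _ _)
    have i1 := int_on (U := fun x y => graphonOfGraph G (σ₁ x) (σ₁ y) - W (σ₂ x) (σ₂ y))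
      (((gog_measurable G).comp p2).sub (hW.2.1.comp p3)) bd1 (hSI F) (hSI H)
    have i2 := int_on (U := fun x y => W (σ₂ x) (σ₂ y) - barStep n W (σ₂ x) (σ₂ y))
      ((hW.2.1.comp p3).sub ((bar_measurable n W).comp p3)) (fun x y => bd2 _ _) (hSI F) (hSI H)
    have e2 : ∫ p in (E ∩ φ ⁻¹' (F : Set _)) ×ˢ (E ∩ φ ⁻¹' (H : Set _)),
          (adjM G (φ p.1).1 (φ p.2).1 - avgM n W (φ p.1).2 (φ p.2).2) =
        (∫ p in (E ∩ φ ⁻¹' (F : Set _)) ×ˢ (E ∩ φ ⁻¹' (H : Set _)),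
          (graphonOfGraph G (σ₁ p.1) (σ₁ p.2) - W (σ₂ p.1) (σ₂ p.2))) +
        ∫ p in (E ∩ φ ⁻¹' (F : Set _)) ×ˢ (E ∩ φ ⁻¹' (H : Set _)),
          (W (σ₂ p.1) (σ₂ p.2) - barStep n W (σ₂ p.1) (σ₂ p.2)) := by
      rw [← integral_add i1 i2]
      refine setIntegral_congr_fun ((hSm F).prod (hSm H)) fun p hp => ?_
      have a := hp.1.1
      have b := hp.2.1
      simp only [φ]
      rw [gog_eq hn G a.2.1 b.2.1, bar_eq hn W a.2.2 b.2.2]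
      ring
    rw [e1, e2]
    refine (abs_add_le _ _).trans (add_le_add ?_ ?_)
    · exact cut_ge (U := fun x y => graphonOfGraph G (σ₁ x) (σ₁ y) - W (σ₂ x) (σ₂ y)) bd1
        (hSm F) (hSm H) (hSI F) (hSI H)
    · exact cut_pull (V := fun x y => W x y - barStep n W x y)
        (hW.2.1.sub (bar_measurable n W)) bd2 h₂ (hSI F) (hSI H)

theorem numeric {n : ℕ} (hn : 2 ≤ n) (hL : 324 < Real.logb 2 (n:ℝ)) :
    ∃ (ε : ℝ) (N : ℕ), 0 < ε ∧ 1 ≤ N * ε^2 ∧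
      4 * ε + 8 * N * ε * 16^N / n ≤ 18 / Real.sqrt (Real.logb 2 (n:ℝ)) := by
  have hn' : (0:ℝ) < n := by exact_mod_cast (by omega : 0 < n)
  set L := Real.logb 2 (n:ℝ) with hLdef
  have hL0 : 0 < L := by linarith
  have hs : 0 < Real.sqrt L := Real.sqrt_pos.2 hL0
  have hss : Real.sqrt L ^ 2 = L := Real.sq_sqrt hL0.le
  refine ⟨4 / Real.sqrt L, ⌈L / 16⌉₊, by positivity, ?_, ?_⟩
  · have := Nat.le_ceil (L / 16)
    rw [div_pow, hss]
    rw [← mul_div_assoc, le_div_iff₀ hL0]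
    linarith
  · set N := ⌈L / 16⌉₊ with hN
    have h1 : L / 16 ≤ N := Nat.le_ceil _
    have h2 : (N:ℝ) < L / 16 + 1 := Nat.ceil_lt_add_one (by positivity)
    have h3 : 20 ≤ N := by
      have : (20:ℝ) < N := by linarith
      exact_mod_cast this.le
    have h4 : 16 * N * 16 ^ N ≤ n := by
      have a1 : 16 * N * 16 ^ N ≤ 2 ^ (16 * (N - 1)) := by
        calc 16 * N * 16 ^ N ≤ 2 ^ 4 * 2 ^ N * (2 ^ 4) ^ N := by
              have := (Nat.lt_two_pow_self (n := N)).le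
              gcongr <;> norm_num
          _ = 2 ^ (4 + N + 4 * N) := by rw [← pow_mul, ← pow_add, ← pow_add]
          _ ≤ _ := Nat.pow_le_pow_right (by norm_num) (by omega)
      have a2 : ((2 ^ (16 * (N - 1)) : ℕ) : ℝ) ≤ n := by
        have : (n:ℝ) = (2:ℝ) ^ L := (Real.rpow_logb (by norm_num) (by norm_num) hn').symm
        rw [this]
        push_cast
        rw [← Real.rpow_natCast]
        refine Real.rpow_le_rpow_of_exponent_le (by norm_num) ?_
        have : ((N - 1 : ℕ) : ℝ) = N - 1 := by
          rw [Nat.cast_sub (by omega)]; simp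
        push_cast
        rw [this]
        linarith
      exact a1.trans (by exact_mod_cast a2)
    have h5 : (16 * N * 16 ^ N : ℝ) ≤ n := by exact_mod_cast h4
    have h6 : 4 * (4 / Real.sqrt L) + 8 * N * (4 / Real.sqrt L) * 16 ^ N / n =
        (16 + 2 * ((16 * N * 16 ^ N) / n)) / Real.sqrt L := by
      field_simp
      ring
    rw [h6]
    refine div_le_div_of_nonneg_right ?_ hs.le
    have := div_le_one_of_le₀ h5 hn'.le
    linarith

/-- Lemma 4.1: every graph `G` on `{1,…,n}` has a relabelling `G̃` with
`d_□(W_{G̃}, W) ≤ δ_□(G, W) + 2 d_□(W, W̄_n) + 18/√(log₂ n)`. -/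
theorem stmt3 (W : ℝ → ℝ → ℝ) (hW : IsGraphon W) (n : ℕ) (hn : 2 ≤ n)
    (G : SimpleGraph (Fin n)) :
    ∃ π : Equiv.Perm (Fin n),
      dCut (graphonOfGraph (G.comap ⇑π)) W ≤
        deltaCut (graphonOfGraph G) W + 2 * dCut W (barStep n W) +
          18 / Real.sqrt (Real.logb 2 (n : ℝ)) := by
  classical
  have hn0 : 0 < n := by omega
  have hd0 : 0 ≤ deltaCut (graphonOfGraph G) W := by
    refine Real.sInf_nonneg ?_
    rintro r ⟨_, _, _, _, rfl⟩
    exact cut_nonneg _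
  have he0 : 0 ≤ dCut W (barStep n W) := cut_nonneg _
  by_cases hL : 324 < Real.logb 2 (n:ℝ)
  · obtain ⟨ε, N, hε, hN, hnum⟩ := numeric hn hL
    obtain ⟨π, hπ⟩ := Finite.exists_min
      (fun π : Equiv.Perm (Fin n) => dCut (graphonOfGraph (G.comap ⇑π)) W)
    refine ⟨π, ?_⟩
    have key : dCut (graphonOfGraph (G.comap ⇑π)) W - 2 * dCut W (barStep n W) -
        18 / Real.sqrt (Real.logb 2 (n : ℝ)) ≤ deltaCut (graphonOfGraph G) W := by
      have hid : IsMPSelf id := ⟨MeasurePreserving.id _, fun x hx => hx⟩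
      refine le_csInf ⟨_, id, id, hid, hid, rfl⟩ ?_
      rintro r ⟨σ₁, σ₂, h₁, h₂, rfl⟩
      obtain ⟨X, hX, hXr, hXc, hcut⟩ := overlay hW hn0 G h₁ h₂
      obtain ⟨ρ, hρ⟩ := comb hn0 (adjM G) (avgM n W) (adjM_mem G) (avgM_mem hW) X hX hXr hXc _
        hcut ε hε N hN
      have := dCut_of_cutLe hW hn0 (G.comap ⇑ρ) _ hρ
      have := (hπ ρ).trans this
      linarith
    linarith
  · refine ⟨1, ?_⟩
    have hpos : 0 < Real.logb 2 (n:ℝ) :=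
      Real.logb_pos (by norm_num) (by exact_mod_cast (by omega : 1 < n))
    have h1 : dCut (graphonOfGraph (G.comap ⇑(1 : Equiv.Perm (Fin n)))) W ≤ 1 :=
      cut_le fun S T _ _ hS hT => abs_int_le
        (U := fun x y => graphonOfGraph (G.comap ⇑(1 : Equiv.Perm (Fin n))) x y - W x y)
        (fun x y => abs_sub_le_one' (gog_mem _ x y) (hW.2.2 x y)) hS hT
    have h2 : (1:ℝ) ≤ 18 / Real.sqrt (Real.logb 2 (n:ℝ)) := by
      rw [le_div_iff₀ (Real.sqrt_pos.2 hpos), one_mul]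
      refine Real.sqrt_le_iff.2 ⟨by norm_num, ?_⟩
      have := not_lt.1 hL
      linarith
    linarith

end
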